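/- Enriched Dubuc Theorem: Let (L ⊣ U, η, ε): 𝔅 → ℭ and (E ⊣ R, ρ, μ): 𝔄 → ℭ be V-adjunctions and J: 𝔄 → 𝔅 a V-functor with L∘J = E, and assume L is V-precomonadic. Then J has a right V-adjoint G if and only if for each object Y of 𝔅 the V-equalizer of the pair RL(U(μ_{LY})η_{JRLY})ρ_{RLY}, RL(η_Y): RLY ⇉ RLULY exists in 𝔄; in that case these V-equalizers give the values of the right V-adjoint G. -/

import Mathlib

/-! Enriched adjoint triangles (Section 1 of "On Biadjoint Triangles", Lucatelli Nunes). -/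

open CategoryTheory MonoidalCategory Limits

universe v u u₁ u₂ u₃

namespace EnrichedAdjointTriangles

variable (V : Type u) [Category.{v} V] [MonoidalCategory V] [SymmetricCategory V]
  [MonoidalClosed V] [HasLimits V] [HasColimits V]

section Defs
variable {C : Type u₁} [EnrichedCategory V C]

/-- A generalized element of the `V`-object of morphisms, i.e. a morphism of the
underlying category. -/
abbrev EHom (a b : C) : Type v := (𝟙_ V) ⟶ (a ⟶[V] b)

/-- Composition of generalized elements. -/
def vcomp {a b c : C} (f : EHom V a b) (g : EHom V b c) : EHom V a c :=
  (λ_ (𝟙_ V)).inv ≫ (f ⊗ₘ g) ≫ eComp V a b c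

/-- Post-composition with a generalized element, as a morphism of `V`. -/
def postcompV (W : C) {a b : C} (e : EHom V a b) : ((W ⟶[V] a) : V) ⟶ (W ⟶[V] b) :=
  (ρ_ _).inv ≫ (𝟙 _ ⊗ₘ e) ≫ eComp V W a b

/-- Pre-composition with a generalized element, as a morphism of `V`. -/
def precompV {a b : C} (e : EHom V a b) (c : C) : ((b ⟶[V] c) : V) ⟶ (a ⟶[V] c) :=
  (λ_ _).inv ≫ (e ⊗ₘ 𝟙 _) ≫ eComp V a b c

/-- `(e, i)` is a conical `V`-equalizer of the pair of morphisms `q, r : a ⟶ b`: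
each `V`-valued hom-functor takes it to an equalizer diagram in `V`. -/
structure IsVEqualizer {a b : C} (q r : EHom V a b) (e : C) (i : EHom V e a) : Prop where
  w : ∀ W : C, postcompV V W i ≫ postcompV V W q = postcompV V W i ≫ postcompV V W r
  isLimit : ∀ W : C, Nonempty (IsLimit (Fork.ofι (postcompV V W i) (w W)))

/-- The conical `V`-equalizer of `q` and `r` exists. -/
def HasVEqualizer {a b : C} (q r : EHom V a b) : Prop :=
  ∃ (e : C) (i : EHom V e a), IsVEqualizer V q r e i

end Defs

section Nat
variable {B : Type u₁} [EnrichedCategory V B] {C : Type u₂} [EnrichedCategory V C]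

/-- A `V`-natural transformation between `V`-functors. -/
structure VNat (F G : EnrichedFunctor V B C) where
  app : ∀ X : B, EHom V (F.obj X) (G.obj X)
  naturality :
    ∀ X Y : B,
      (ρ_ _).inv ≫ (F.map X Y ⊗ₘ app Y) ≫ eComp V (F.obj X) (F.obj Y) (G.obj Y) =
        (λ_ _).inv ≫ (app X ⊗ₘ G.map X Y) ≫ eComp V (F.obj X) (G.obj X) (G.obj Y)

/-- A `V`-adjunction `(L ⊣ U, η, ε)`, given by unit and counit `V`-natural
transformations satisfying the triangle identities. -/
structure VAdjunction (L : EnrichedFunctor V B C) (U : EnrichedFunctor V C B) where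
  η : VNat V (EnrichedFunctor.id V B) (EnrichedFunctor.comp V L U)
  ε : VNat V (EnrichedFunctor.comp V U L) (EnrichedFunctor.id V C)
  left_triangle :
    ∀ X : B,
      vcomp V (η.app X ≫ L.map X (U.obj (L.obj X))) (ε.app (L.obj X)) = eId V (L.obj X)
  right_triangle :
    ∀ Y : C,
      vcomp V (η.app (U.obj Y)) (ε.app Y ≫ U.map (L.obj (U.obj Y)) Y) = eId V (U.obj Y)

end Nat

section Triangle

variable {A : Type u₁} [EnrichedCategory V A] {B : Type u₂} [EnrichedCategory V B]
  {C : Type u₃} [EnrichedCategory V C]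
  (J : EnrichedFunctor V A B) (L : EnrichedFunctor V B C) (R : EnrichedFunctor V C A)
  (U : EnrichedFunctor V C B)
  (adj1 : VAdjunction V (EnrichedFunctor.comp V J L) R) (adj2 : VAdjunction V L U)

/-- The generalized element `L(η_Y) : LY ⟶ LULY`. -/
def Lη (Y : B) : EHom V (L.obj Y) (L.obj (U.obj (L.obj Y))) :=
  adj2.η.app Y ≫ L.map Y (U.obj (L.obj Y))

/-- `ℭ(EA, L(η_Y))`, the first leg of the parallel pair. -/
def parallelFst (A' : A) (Y : B) :
    ((L.obj (J.obj A') ⟶[V] L.obj Y) : V) ⟶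
      (L.obj (J.obj A') ⟶[V] L.obj (U.obj (L.obj Y))) :=
  postcompV V (L.obj (J.obj A')) (Lη V L U adj2 Y)

/-- `L_{JA, ULY} ∘ χ_{(JA, LY)}`, the second leg of the parallel pair:
`f ↦ L(U(f) ∘ η_{JA})`. -/
def parallelSnd (A' : A) (Y : B) :
    ((L.obj (J.obj A') ⟶[V] L.obj Y) : V) ⟶
      (L.obj (J.obj A') ⟶[V] L.obj (U.obj (L.obj Y))) :=
  U.map (L.obj (J.obj A')) (L.obj Y) ≫
    precompV V (adj2.η.app (J.obj A')) (U.obj (L.obj Y)) ≫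
    L.map (J.obj A') (U.obj (L.obj Y))

/-- The generalized element `q_Y = RL(η_Y) : RLY ⟶ RLULY`. -/
def qY (Y : B) :
    EHom V (R.obj (L.obj Y)) (R.obj (L.obj (U.obj (L.obj Y)))) :=
  Lη V L U adj2 Y ≫ R.map (L.obj Y) (L.obj (U.obj (L.obj Y)))

/-- The generalized element `r_Y = RL(U(μ_{LY}) ∘ η_{JRLY}) ∘ ρ_{RLY} : RLY ⟶ RLULY`. -/
def rY (Y : B) :
    EHom V (R.obj (L.obj Y)) (R.obj (L.obj (U.obj (L.obj Y)))) :=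
  vcomp V (adj1.η.app (R.obj (L.obj Y)))
    (vcomp V (adj2.η.app (J.obj (R.obj (L.obj Y))))
        (adj1.ε.app (L.obj Y) ≫
          U.map (L.obj (J.obj (R.obj (L.obj Y)))) (L.obj Y)) ≫
      L.map (J.obj (R.obj (L.obj Y))) (U.obj (L.obj Y)) ≫
      R.map (L.obj (J.obj (R.obj (L.obj Y)))) (L.obj (U.obj (L.obj Y))))

/-- `L` is `V`-precomonadic: for every `Y`, the diagram
`Y → ULY ⇉ ULULY` is a conical `V`-equalizer. -/
def VPrecomonadic : Prop :=
  ∀ Y : B,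
    IsVEqualizer V (adj2.η.app (U.obj (L.obj Y)))
      (Lη V L U adj2 Y ≫ U.map (L.obj Y) (L.obj (U.obj (L.obj Y))))
      Y (adj2.η.app Y)

end Triangle

end EnrichedAdjointTriangles

namespace EnrichedAdjointTriangles

section Helpers

variable {V : Type u} [Category.{v} V] [MonoidalCategory V]

section Basic
variable {C : Type u₁} [EnrichedCategory V C]

lemma vcomp_eq_post {a b c : C} (f : EHom V a b) (g : EHom V b c) :
    vcomp V f g = f ≫ postcompV V a g := by
  simp only [vcomp, postcompV, MonoidalCategory.tensorHom_def, id_whiskerRight, Category.id_comp]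
  rw [rightUnitor_inv_naturality_assoc, unitors_inv_equal, Category.assoc]

lemma vcomp_eq_pre {a b c : C} (f : EHom V a b) (g : EHom V b c) :
    vcomp V f g = g ≫ precompV V f c := by
  simp only [vcomp, precompV, tensorHom_def', whiskerLeft_id, Category.id_comp]
  rw [leftUnitor_inv_naturality_assoc, Category.assoc]

lemma post_id (W a : C) : postcompV V W (eId V a) = 𝟙 _ := by
  simp [postcompV]

lemma pre_id (a c : C) : precompV V (eId V a) c = 𝟙 _ := by
  simp [precompV]

lemma eId_post {a b : C} (f : EHom V a b) : eId V a ≫ postcompV V a f = f := by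
  rw [← vcomp_eq_post, vcomp_eq_pre, pre_id, Category.comp_id]

lemma eId_pre {a b : C} (f : EHom V a b) : eId V b ≫ precompV V f b = f := by
  rw [← vcomp_eq_pre, vcomp_eq_post, post_id, Category.comp_id]

lemma eComp_post (a b : C) {c d : C} (g : EHom V c d) :
    eComp V a b c ≫ postcompV V a g = (_ ◁ postcompV V b g) ≫ eComp V a b d := by
  simp only [postcompV, id_tensorHom, whiskerLeft_comp, Category.assoc]
  rw [rightUnitor_inv_naturality_assoc, ← whisker_exchange_assoc, ← e_assoc']
  simp

lemma eComp_pre {a b : C} (f : EHom V a b) (c d : C) :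
    eComp V b c d ≫ precompV V f d = (precompV V f c ▷ _) ≫ eComp V a c d := by
  simp only [precompV, tensorHom_id, comp_whiskerRight, Category.assoc]
  rw [leftUnitor_inv_naturality_assoc, whisker_exchange_assoc]
  simp [e_assoc']

lemma pre_post_mid (a : C) {b c : C} (f : EHom V b c) (d : C) :
    (_ ◁ precompV V f d) ≫ eComp V a b d = (postcompV V a f ▷ _) ≫ eComp V a c d := by
  simp only [precompV, postcompV, tensorHom_id, id_tensorHom, comp_whiskerRight,
    whiskerLeft_comp, Category.assoc, ← e_assoc']
  simp

lemma pre_post {a b c d : C} (f : EHom V a b) (g : EHom V c d) :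
    precompV V f c ≫ postcompV V a g = postcompV V b g ≫ precompV V f d := by
  conv_lhs => rw [precompV]
  rw [Category.assoc, Category.assoc, eComp_post, precompV, tensorHom_id, tensorHom_id,
    leftUnitor_inv_naturality_assoc, whisker_exchange_assoc]

lemma pre_post_assoc {a b c d : C} (f : EHom V a b) (g : EHom V c d) {T : V}
    (h : ((a ⟶[V] d) : V) ⟶ T) :
    precompV V f c ≫ postcompV V a g ≫ h = postcompV V b g ≫ precompV V f d ≫ h := by
  rw [← Category.assoc, pre_post, Category.assoc]

lemma post_comp (W : C) {a b c : C} (f : EHom V a b) (g : EHom V b c) :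
    postcompV V W (vcomp V f g) = postcompV V W f ≫ postcompV V W g := by
  conv_rhs => rw [postcompV]
  rw [Category.assoc, Category.assoc, eComp_post, id_tensorHom, ← whiskerLeft_comp_assoc,
    ← vcomp_eq_post, postcompV, id_tensorHom]

lemma pre_comp {a b c : C} (f : EHom V a b) (g : EHom V b c) (d : C) :
    precompV V (vcomp V f g) d = precompV V g d ≫ precompV V f d := by
  conv_rhs => rw [precompV]
  rw [Category.assoc, Category.assoc, eComp_pre, tensorHom_id, ← comp_whiskerRight_assoc,
    ← vcomp_eq_pre, precompV, tensorHom_id]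

end Basic

section Func
variable {B : Type u₁} [EnrichedCategory V B] {C : Type u₂} [EnrichedCategory V C]

lemma map_post (F : EnrichedFunctor V B C) (W : B) {a b : B} (f : EHom V a b) :
    postcompV V W f ≫ F.map W b = F.map W a ≫ postcompV V (F.obj W) (f ≫ F.map a b) := by
  simp only [postcompV, id_tensorHom, Category.assoc, F.map_comp, whiskerLeft_comp]
  rw [rightUnitor_inv_naturality_assoc, MonoidalCategory.tensorHom_def, Category.assoc,
    whisker_exchange_assoc]

lemma map_post_assoc (F : EnrichedFunctor V B C) (W : B) {a b : B} (f : EHom V a b) {T : V}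
    (h : ((F.obj W ⟶[V] F.obj b) : V) ⟶ T) :
    postcompV V W f ≫ F.map W b ≫ h =
      F.map W a ≫ postcompV V (F.obj W) (f ≫ F.map a b) ≫ h := by
  rw [← Category.assoc, map_post, Category.assoc]

lemma map_pre (F : EnrichedFunctor V B C) {a b : B} (f : EHom V a b) (W : B) :
    precompV V f W ≫ F.map a W = F.map b W ≫ precompV V (f ≫ F.map a b) (F.obj W) := by
  simp only [precompV, tensorHom_id, Category.assoc, F.map_comp, comp_whiskerRight]
  rw [leftUnitor_inv_naturality_assoc, tensorHom_def', Category.assoc,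
    ← whisker_exchange_assoc]

lemma map_pre_assoc (F : EnrichedFunctor V B C) {a b : B} (f : EHom V a b) (W : B) {T : V}
    (h : ((F.obj a ⟶[V] F.obj W) : V) ⟶ T) :
    precompV V f W ≫ F.map a W ≫ h =
      F.map b W ≫ precompV V (f ≫ F.map a b) (F.obj W) ≫ h := by
  rw [← Category.assoc, map_pre, Category.assoc]

lemma nat_iff {F G : EnrichedFunctor V B C} (app : ∀ X : B, EHom V (F.obj X) (G.obj X))
    (X Y : B) :
    ((ρ_ _).inv ≫ (F.map X Y ⊗ₘ app Y) ≫ eComp V (F.obj X) (F.obj Y) (G.obj Y) =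
        (λ_ _).inv ≫ (app X ⊗ₘ G.map X Y) ≫ eComp V (F.obj X) (G.obj X) (G.obj Y)) ↔
    F.map X Y ≫ postcompV V _ (app Y) = G.map X Y ≫ precompV V (app X) _ := by
  simp only [precompV, postcompV, tensorHom_id, id_tensorHom]
  rw [rightUnitor_inv_naturality_assoc, leftUnitor_inv_naturality_assoc,
    MonoidalCategory.tensorHom_def, tensorHom_def', Category.assoc, Category.assoc]

end Func

section Adj
variable {B : Type u₁} [EnrichedCategory V B] {C : Type u₂} [EnrichedCategory V C]

/-- A `V`-adjunction with its data in unfolded form. -/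
structure PAdj (L : EnrichedFunctor V B C) (U : EnrichedFunctor V C B) where
  η : ∀ X : B, EHom V X (U.obj (L.obj X))
  ε : ∀ Y : C, EHom V (L.obj (U.obj Y)) Y
  unit_nat : ∀ X Y : B,
    L.map X Y ≫ U.map (L.obj X) (L.obj Y) ≫ precompV V (η X) (U.obj (L.obj Y)) =
      postcompV V X (η Y)
  counit_nat : ∀ X Y : C,
    U.map X Y ≫ L.map (U.obj X) (U.obj Y) ≫ postcompV V (L.obj (U.obj X)) (ε Y) =
      precompV V (ε X) Y
  left_triangle : ∀ X : B, vcomp V (η X ≫ L.map X (U.obj (L.obj X))) (ε (L.obj X)) =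
    eId V (L.obj X)
  right_triangle : ∀ Y : C, vcomp V (η (U.obj Y)) (ε Y ≫ U.map (L.obj (U.obj Y)) Y) =
    eId V (U.obj Y)

variable {L : EnrichedFunctor V B C} {U : EnrichedFunctor V C B}

lemma PAdj.unit_nat_assoc (adj : PAdj L U) (X Y : B) {T : V}
    (h : ((X ⟶[V] U.obj (L.obj Y)) : V) ⟶ T) :
    L.map X Y ≫ U.map (L.obj X) (L.obj Y) ≫ precompV V (adj.η X) (U.obj (L.obj Y)) ≫ h =
      postcompV V X (adj.η Y) ≫ h := by
  rw [← adj.unit_nat]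
  simp only [Category.assoc]

lemma PAdj.counit_nat_assoc (adj : PAdj L U) (X Y : C) {T : V}
    (h : ((L.obj (U.obj X) ⟶[V] Y) : V) ⟶ T) :
    U.map X Y ≫ L.map (U.obj X) (U.obj Y) ≫ postcompV V (L.obj (U.obj X)) (adj.ε Y) ≫ h =
      precompV V (adj.ε X) Y ≫ h := by
  rw [← adj.counit_nat]
  simp only [Category.assoc]

/-- Unfold a `V`-adjunction. -/
def VAdjunction.toP (adj : VAdjunction V L U) : PAdj L U where
  η := adj.η.app
  ε := adj.ε.app
  unit_nat X Y := by
    have h := (nat_iff adj.η.app X Y).1 (adj.η.naturality X Y)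
    generalize adj.η.app = e at h
    have h' : ∀ e : (∀ X : B, EHom V X (U.obj (L.obj X))), 𝟙 _ ≫ postcompV V X (e Y) =
      (L.map X Y ≫ U.map (L.obj X) (L.obj Y)) ≫ precompV V (e X) (U.obj (L.obj Y)) →
      L.map X Y ≫ U.map (L.obj X) (L.obj Y) ≫ precompV V (e X) (U.obj (L.obj Y)) =
      postcompV V X (e Y) := by
      intro e h
      rw [Category.id_comp, Category.assoc] at h
      exact h.symm
    exact h' e h
  counit_nat X Y := by
    have h := (nat_iff adj.ε.app X Y).1 (adj.ε.naturality X Y)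
    generalize adj.ε.app = e at h
    have h' : ∀ e : (∀ Y : C, EHom V (L.obj (U.obj Y)) Y),
      (U.map X Y ≫ L.map (U.obj X) (U.obj Y)) ≫ postcompV V (L.obj (U.obj X)) (e Y) =
        𝟙 _ ≫ precompV V (e X) Y →
      U.map X Y ≫ L.map (U.obj X) (U.obj Y) ≫ postcompV V (L.obj (U.obj X)) (e Y) =
        precompV V (e X) Y := by
      intro e h
      rw [Category.id_comp, Category.assoc] at h
      exact h
    exact h' e h
  left_triangle := adj.left_triangle
  right_triangle := adj.right_triangle

/-- The hom-isomorphism of a `V`-adjunction. -/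
def chi (adj : PAdj L U) (X : B) (Z : C) : ((L.obj X ⟶[V] Z) : V) ≅ (X ⟶[V] U.obj Z) where
  hom := U.map (L.obj X) Z ≫ precompV V (adj.η X) (U.obj Z)
  inv := L.map X (U.obj Z) ≫ postcompV V (L.obj X) (adj.ε Z)
  hom_inv_id := by
    rw [Category.assoc, map_pre_assoc, pre_post, adj.counit_nat_assoc, ← pre_comp,
      adj.left_triangle, pre_id]
  inv_hom_id := by
    rw [Category.assoc, map_post_assoc, ← pre_post, adj.unit_nat_assoc, ← post_comp,
      adj.right_triangle, post_id]

end Adj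

section Univ
variable {A : Type u₁} [EnrichedCategory V A] {B : Type u₂} [EnrichedCategory V B]

/-- A right adjoint built from universal arrows. -/
lemma exists_right_adjoint (J : EnrichedFunctor V A B) (G : B → A)
    (ε : ∀ Y : B, EHom V (J.obj (G Y)) Y)
    (θ : ∀ (X : A) (Y : B), ((J.obj X ⟶[V] Y) : V) ≅ (X ⟶[V] G Y))
    (hθ : ∀ X Y, (θ X Y).inv = J.map X (G Y) ≫ postcompV V (J.obj X) (ε Y)) :
    ∃ G : EnrichedFunctor V B A, Nonempty (VAdjunction V J G) := by
  have key : ∀ X Y, (θ X Y).hom ≫ J.map X (G Y) ≫ postcompV V (J.obj X) (ε Y) = 𝟙 _ := by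
    intro X Y; rw [← hθ]; simp
  have key' : ∀ X Y {T : V} (h : _ ⟶ T),
      (θ X Y).hom ≫ J.map X (G Y) ≫ postcompV V (J.obj X) (ε Y) ≫ h = h := by
    intro X Y T h
    have := key X Y =≫ h
    simpa using this
  have cancel : ∀ {X Y} {T : V} (f g : T ⟶ (X ⟶[V] G Y)),
      f ≫ J.map X (G Y) ≫ postcompV V (J.obj X) (ε Y) =
        g ≫ J.map X (G Y) ≫ postcompV V (J.obj X) (ε Y) → f = g := by
    intro X Y T f g h
    rw [← hθ] at h
    exact (cancel_mono _).1 h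
  let G' : EnrichedFunctor V B A :=
    { obj := G
      map := fun Y Z => precompV V (ε Y) Z ≫ (θ (G Y) Z).hom
      map_id := by
        intro Y
        apply cancel
        rw [Category.assoc, Category.assoc, key, Category.comp_id, eId_pre, J.map_id_assoc,
          eId_post]
      map_comp := by
        intro X Y Z
        apply cancel
        simp only [Category.assoc]
        rw [key, Category.comp_id, J.map_comp_assoc, eComp_post, MonoidalCategory.tensorHom_def,
          MonoidalCategory.tensorHom_def]
        simp only [Category.assoc]
        rw [← whiskerLeft_comp_assoc, whisker_exchange_assoc, ← whiskerLeft_comp_assoc]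
        simp only [Category.assoc]
        rw [key, Category.comp_id, pre_post_mid,
          ← comp_whiskerRight_assoc, ← comp_whiskerRight_assoc]
        simp only [Category.assoc]
        rw [key, Category.comp_id, eComp_pre] }
  have Gmap : ∀ Y Z, G'.map Y Z = precompV V (ε Y) Z ≫ (θ (G Y) Z).hom := fun _ _ => rfl
  let η : ∀ X : A, EHom V X (G (J.obj X)) := fun X => eId V (J.obj X) ≫ (θ X (J.obj X)).hom
  have tri : ∀ X, vcomp V (η X ≫ J.map X (G (J.obj X))) (ε (J.obj X)) = eId V (J.obj X) := by
    intro X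
    rw [vcomp_eq_post]
    simp only [η, Category.assoc]
    rw [key, Category.comp_id]
  refine ⟨G', ⟨⟨⟨η, ?_⟩, ⟨ε, ?_⟩, tri, ?_⟩⟩⟩
  · intro X Y
    refine (nat_iff (F := EnrichedFunctor.id V A) (G := EnrichedFunctor.comp V J G') η X Y).2 ?_
    change 𝟙 _ ≫ postcompV V X (η Y) =
      (J.map X Y ≫ precompV V (ε (J.obj X)) (J.obj Y) ≫ (θ (G (J.obj X)) (J.obj Y)).hom) ≫
        precompV V (η X) (G (J.obj Y))
    apply cancel
    simp only [Category.assoc, Category.id_comp]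
    rw [map_post_assoc, ← post_comp, tri, post_id, map_pre_assoc, pre_post, key', ← pre_comp,
      tri, pre_id]
  · intro X Y
    refine (nat_iff (F := EnrichedFunctor.comp V G' J) (G := EnrichedFunctor.id V B) ε X Y).2 ?_
    change ((precompV V (ε X) Y ≫ (θ (G X) Y).hom) ≫ J.map (G X) (G Y)) ≫
      postcompV V (J.obj (G X)) (ε Y) = 𝟙 _ ≫ precompV V (ε X) Y
    simp only [Category.assoc, Category.id_comp]
    rw [key, Category.comp_id]
  · intro Y
    change vcomp V (η (G Y)) (ε Y ≫ precompV V (ε (J.obj (G Y))) Y ≫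
      (θ (G (J.obj (G Y))) Y).hom) = eId V (G Y)
    rw [vcomp_eq_pre]
    apply cancel
    simp only [Category.assoc]
    rw [map_pre_assoc, pre_post, key', ← pre_comp, tri, pre_id, J.map_id_assoc, eId_post,
      Category.comp_id]

end Univ

section Eq

set_option linter.unusedSectionVars false

/-- Transport a fork limit along isomorphisms of the parallel pair and a new vertex. -/
lemma isLimit_transport {X Y X' Y' P P' : V} {f g : X ⟶ Y} {f' g' : X' ⟶ Y'}
    {ι : P ⟶ X} {ι' : P' ⟶ X'} {w : ι ≫ f = ι ≫ g} {w' : ι' ≫ f' = ι' ≫ g'}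
    (h : IsLimit (Fork.ofι ι w)) (p : P ≅ P') (a : X ≅ X') (b : Y ≅ Y')
    (hf : f ≫ b.hom = a.hom ≫ f') (hg : g ≫ b.hom = a.hom ≫ g')
    (hι : ι ≫ a.hom = p.hom ≫ ι') : Nonempty (IsLimit (Fork.ofι ι' w')) := by
  have hf' : a.inv ≫ f = f' ≫ b.inv := by
    rw [Iso.inv_comp_eq, ← Category.assoc, ← hf]; simp
  have hg' : a.inv ≫ g = g' ≫ b.inv := by
    rw [Iso.inv_comp_eq, ← Category.assoc, ← hg]; simp
  have hι' : ι' ≫ a.inv = p.inv ≫ ι := by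
    rw [Iso.eq_inv_comp, ← Category.assoc, ← hι]; simp
  refine ⟨Fork.IsLimit.mk' _ fun s => ?_⟩
  have hs : (s.ι ≫ a.inv) ≫ f = (s.ι ≫ a.inv) ≫ g := by
    rw [Category.assoc, Category.assoc, hf', hg', s.condition_assoc]
  obtain ⟨l, hl⟩ := Fork.IsLimit.lift' h (s.ι ≫ a.inv) hs
  refine ⟨l ≫ p.hom, ?_, ?_⟩
  · change (l ≫ p.hom) ≫ ι' = s.ι
    rw [Category.assoc, ← hι]
    have hl' : l ≫ ι = s.ι ≫ a.inv := hl
    rw [← Category.assoc, hl']; simp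
  · intro m hm
    have hm' : m ≫ ι' = s.ι := hm
    rw [← Iso.comp_inv_eq]
    apply Fork.IsLimit.hom_ext h
    rw [hl]
    change (m ≫ p.inv) ≫ ι = _
    rw [Category.assoc, ← hι', ← hm', Category.assoc]

end Eq

section Tri

variable {A : Type u₁} [EnrichedCategory V A] {B : Type u₂} [EnrichedCategory V B]
  {C : Type u₃} [EnrichedCategory V C]

/-- An adjunction `L ∘ J ⊣ R` with its data in unfolded form. -/
structure CAdj (J : EnrichedFunctor V A B) (L : EnrichedFunctor V B C)
    (R : EnrichedFunctor V C A) where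
  η : ∀ X : A, EHom V X (R.obj (L.obj (J.obj X)))
  ε : ∀ Y : C, EHom V (L.obj (J.obj (R.obj Y))) Y
  unit_nat : ∀ X Y : A,
    J.map X Y ≫ L.map (J.obj X) (J.obj Y) ≫ R.map (L.obj (J.obj X)) (L.obj (J.obj Y)) ≫
      precompV V (η X) (R.obj (L.obj (J.obj Y))) = postcompV V X (η Y)
  /-- The hom-isomorphism. -/
  psi : ∀ (X : A) (Z : C), ((L.obj (J.obj X) ⟶[V] Z) : V) ≅ (X ⟶[V] R.obj Z)
  psi_hom : ∀ (X : A) (Z : C), (psi X Z).hom =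
    R.map (L.obj (J.obj X)) Z ≫ precompV V (η X) (R.obj Z)
  psi_inv : ∀ (X : A) (Z : C), (psi X Z).inv =
    (J.map X (R.obj Z) ≫ L.map (J.obj X) (J.obj (R.obj Z))) ≫
      postcompV V (L.obj (J.obj X)) (ε Z)

variable (J : EnrichedFunctor V A B) (L : EnrichedFunctor V B C) (R : EnrichedFunctor V C A)
  (U : EnrichedFunctor V C B)

/-- Unfold an adjunction with composite left adjoint. -/
def PAdj.toC (adj : PAdj (EnrichedFunctor.comp V J L) R) : CAdj J L R where
  η := adj.η
  ε := adj.ε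
  unit_nat X Y := by
    have h := adj.unit_nat X Y
    have h' : ∀ e : (∀ X : A, EHom V X (R.obj (L.obj (J.obj X)))),
      (J.map X Y ≫ L.map (J.obj X) (J.obj Y)) ≫ R.map (L.obj (J.obj X)) (L.obj (J.obj Y)) ≫
        precompV V (e X) (R.obj (L.obj (J.obj Y))) = postcompV V X (e Y) →
      J.map X Y ≫ L.map (J.obj X) (J.obj Y) ≫ R.map (L.obj (J.obj X)) (L.obj (J.obj Y)) ≫
        precompV V (e X) (R.obj (L.obj (J.obj Y))) = postcompV V X (e Y) := by
      intro e h
      rw [← h, Category.assoc]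
    exact h' adj.η h
  psi := chi adj
  psi_hom _ _ := rfl
  psi_inv _ _ := rfl

variable {J L R U} (adj1 : CAdj J L R) (adj2 : PAdj L U)

/-- First leg. -/
def pFst (X : A) (Y : B) : ((L.obj (J.obj X) ⟶[V] L.obj Y) : V) ⟶
      (L.obj (J.obj X) ⟶[V] L.obj (U.obj (L.obj Y))) :=
  postcompV V (L.obj (J.obj X)) (adj2.η Y ≫ L.map Y (U.obj (L.obj Y)))

/-- Second leg. -/
def pSnd (X : A) (Y : B) : ((L.obj (J.obj X) ⟶[V] L.obj Y) : V) ⟶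
      (L.obj (J.obj X) ⟶[V] L.obj (U.obj (L.obj Y))) :=
  U.map (L.obj (J.obj X)) (L.obj Y) ≫ precompV V (adj2.η (J.obj X)) (U.obj (L.obj Y)) ≫
    L.map (J.obj X) (U.obj (L.obj Y))

/-- Unfolded `qY`. -/
def qq (R : EnrichedFunctor V C A) (adj2 : PAdj L U) (Y : B) : EHom V (R.obj (L.obj Y)) (R.obj (L.obj (U.obj (L.obj Y)))) :=
  (adj2.η Y ≫ L.map Y (U.obj (L.obj Y))) ≫ R.map (L.obj Y) (L.obj (U.obj (L.obj Y)))

/-- Unfolded `rY`. -/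
def rr (Y : B) : EHom V (R.obj (L.obj Y)) (R.obj (L.obj (U.obj (L.obj Y)))) :=
  vcomp V (adj1.η (R.obj (L.obj Y)))
    (vcomp V (adj2.η (J.obj (R.obj (L.obj Y))))
        (adj1.ε (L.obj Y) ≫ U.map (L.obj (J.obj (R.obj (L.obj Y)))) (L.obj Y)) ≫
      L.map (J.obj (R.obj (L.obj Y))) (U.obj (L.obj Y)) ≫
      R.map (L.obj (J.obj (R.obj (L.obj Y)))) (L.obj (U.obj (L.obj Y))))

/-- Unfolded precomonadicity. -/
def PPre : Prop := ∀ Y : B, IsVEqualizer V (adj2.η (U.obj (L.obj Y)))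
  ((adj2.η Y ≫ L.map Y (U.obj (L.obj Y))) ≫ U.map (L.obj Y) (L.obj (U.obj (L.obj Y))))
  Y (adj2.η Y)

/-- `J.map ≫ post f ≫ L.map ≫ psi` is post-composition. -/
lemma map_post_psi (X Z : A) (Y : B) (f : EHom V (J.obj Z) Y) :
    J.map X Z ≫ postcompV V (J.obj X) f ≫ L.map (J.obj X) Y ≫ (adj1.psi X (L.obj Y)).hom
      = postcompV V X (vcomp V (adj1.η Z)
        (f ≫ L.map (J.obj Z) Y ≫ R.map (L.obj (J.obj Z)) (L.obj Y))) := by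
  rw [adj1.psi_hom, map_post_assoc, map_post_assoc]
  have h := post_comp X (adj1.η Z)
        (f ≫ L.map (J.obj Z) Y ≫ R.map (L.obj (J.obj Z)) (L.obj Y))
  refine Eq.trans ?_ h.symm
  rw [← adj1.unit_nat]
  simp only [Category.assoc]
  rw [pre_post]

lemma fst_psi (X : A) (Y : B) :
    pFst adj2 X Y ≫ (adj1.psi X (L.obj (U.obj (L.obj Y)))).hom =
      (adj1.psi X (L.obj Y)).hom ≫ postcompV V X (qq R adj2 Y) := by
  rw [adj1.psi_hom, adj1.psi_hom, pFst, map_post_assoc]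
  simp only [Category.assoc]
  rw [pre_post, qq, Category.assoc]

lemma snd_psi (X : A) (Y : B) :
    pSnd adj2 X Y ≫ (adj1.psi X (L.obj (U.obj (L.obj Y)))).hom =
      (adj1.psi X (L.obj Y)).hom ≫ postcompV V X (rr adj1 adj2 Y) := by
  rw [← Iso.inv_comp_eq, rr]
  refine Eq.trans ?_ (map_post_psi adj1 X (R.obj (L.obj Y)) _ _)
  rw [adj1.psi_inv, pSnd, post_comp]
  simp only [Category.assoc]
  rw [map_post_assoc]
  rw [← adj2.unit_nat]
  simp only [Category.assoc]
  rw [pre_post_assoc]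

lemma fst_chi (X : A) (Y : B) :
    pFst adj2 X Y ≫ (chi adj2 (J.obj X) (L.obj (U.obj (L.obj Y)))).hom =
      (chi adj2 (J.obj X) (L.obj Y)).hom ≫ postcompV V (J.obj X)
        ((adj2.η Y ≫ L.map Y (U.obj (L.obj Y))) ≫ U.map (L.obj Y) (L.obj (U.obj (L.obj Y)))) := by
  simp only [chi, pFst, Category.assoc]
  rw [map_post_assoc, pre_post, Category.assoc]

lemma snd_chi (X : A) (Y : B) :
    pSnd adj2 X Y ≫ (chi adj2 (J.obj X) (L.obj (U.obj (L.obj Y)))).hom =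
      (chi adj2 (J.obj X) (L.obj Y)).hom ≫ postcompV V (J.obj X)
        (adj2.η (U.obj (L.obj Y))) := by
  simp only [chi, pSnd, Category.assoc]
  rw [adj2.unit_nat]

/-- The comparison `B(JX, Y) ⟶ A(X, RLY)`. -/
def cmp (X : A) (Y : B) : ((J.obj X ⟶[V] Y) : V) ⟶ (X ⟶[V] R.obj (L.obj Y)) :=
  L.map (J.obj X) Y ≫ (adj1.psi X (L.obj Y)).hom

lemma cmp_limit (hpre : PPre adj2) (X : A) (Y : B) :
    ∃ w : cmp adj1 X Y ≫ postcompV V X (rr adj1 adj2 Y) =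
        cmp adj1 X Y ≫ postcompV V X (qq R adj2 Y),
      Nonempty (IsLimit (Fork.ofι (cmp adj1 X Y) w)) := by
  obtain ⟨h⟩ := (hpre Y).isLimit (J.obj X)
  have hw := (hpre Y).w (J.obj X)
  let a := (chi adj2 (J.obj X) (L.obj Y)).symm ≪≫ adj1.psi X (L.obj Y)
  let b := (chi adj2 (J.obj X) (L.obj (U.obj (L.obj Y)))).symm ≪≫
    adj1.psi X (L.obj (U.obj (L.obj Y)))
  have ha : postcompV V (J.obj X) (adj2.η Y) ≫ a.hom = cmp adj1 X Y := by
    rw [← adj2.unit_nat]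
    change (L.map (J.obj X) Y ≫ (chi adj2 (J.obj X) (L.obj Y)).hom) ≫
      (chi adj2 (J.obj X) (L.obj Y)).inv ≫ _ = _
    simp [cmp]
  have h1 : postcompV V (J.obj X) (adj2.η (U.obj (L.obj Y))) ≫ b.hom =
      a.hom ≫ postcompV V X (rr adj1 adj2 Y) := by
    simp only [a, b, Iso.trans_hom, Iso.symm_hom, Category.assoc]
    rw [← snd_psi, Iso.eq_inv_comp, ← Category.assoc, ← snd_chi]
    simp
  have h2 : postcompV V (J.obj X) ((adj2.η Y ≫ L.map Y (U.obj (L.obj Y))) ≫ U.map (L.obj Y) (L.obj (U.obj (L.obj Y))))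
        ≫ b.hom = a.hom ≫ postcompV V X (qq R adj2 Y) := by
    have hc := fst_chi (J := J) adj2 X Y
    simp only [Category.assoc] at hc
    simp only [a, b, Iso.trans_hom, Iso.symm_hom, Category.assoc]
    rw [← fst_psi (adj2 := adj2), Iso.eq_inv_comp, ← Category.assoc (chi _ _ _).hom, ← hc]
    simp
  have w : cmp adj1 X Y ≫ postcompV V X (rr adj1 adj2 Y) =
        cmp adj1 X Y ≫ postcompV V X (qq R adj2 Y) := by
    rw [← ha, Category.assoc, Category.assoc, ← h1, ← h2, ← Category.assoc, hw, Category.assoc]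
  exact ⟨w, isLimit_transport h (Iso.refl _) a b h1 h2 (by simp [ha])⟩

lemma part_two (hpre : PPre adj2) (G : EnrichedFunctor V B A)
    (adj : PAdj J G) (Y : B) :
    ∃ i, IsVEqualizer V (rr adj1 adj2 Y) (qq R adj2 Y) (G.obj Y) i := by
  let i : EHom V (G.obj Y) (R.obj (L.obj Y)) := vcomp V (adj1.η (G.obj Y))
        (adj.ε Y ≫ L.map (J.obj (G.obj Y)) Y ≫ R.map (L.obj (J.obj (G.obj Y))) (L.obj Y))
  have hi : ∀ X : A, (chi adj X Y).inv ≫ cmp adj1 X Y = postcompV V X i := by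
    intro X
    have h := map_post_psi adj1 X (G.obj Y) Y (adj.ε Y)
    refine Eq.trans ?_ h
    simp only [chi, cmp, Category.assoc]
  have hw : ∀ W : A, postcompV V W i ≫ postcompV V W (rr adj1 adj2 Y) =
      postcompV V W i ≫ postcompV V W (qq R adj2 Y) := by
    intro W
    obtain ⟨w, -⟩ := cmp_limit adj1 adj2 hpre W Y
    rw [← hi, Category.assoc, Category.assoc, w]
  refine ⟨i, hw, fun W => ?_⟩
  obtain ⟨w, ⟨h⟩⟩ := cmp_limit adj1 adj2 hpre W Y
  exact isLimit_transport h (chi adj W Y) (Iso.refl _) (Iso.refl _) (by simp) (by simp)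
    (by rw [← hi]; simp)

lemma part_one (hpre : PPre adj2)
    (hE : ∀ Y : B, HasVEqualizer V (rr adj1 adj2 Y) (qq R adj2 Y)) :
    ∃ G : EnrichedFunctor V B A, Nonempty (VAdjunction V J G) := by
  choose G i hi using hE
  have hθ : ∀ (X : A) (Y : B), ∃ θ : ((J.obj X ⟶[V] Y) : V) ≅ (X ⟶[V] G Y),
      θ.hom ≫ postcompV V X (i Y) = cmp adj1 X Y := by
    intro X Y
    obtain ⟨w, ⟨h⟩⟩ := cmp_limit adj1 adj2 hpre X Y
    obtain ⟨h'⟩ := (hi Y).isLimit X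
    refine ⟨IsLimit.conePointUniqueUpToIso h h', ?_⟩
    exact IsLimit.conePointUniqueUpToIso_hom_comp h h' WalkingParallelPair.zero
  choose θ hθ using hθ
  have hθ' : ∀ X Y, (θ X Y).inv ≫ cmp adj1 X Y = postcompV V X (i Y) := by
    intro X Y; rw [Iso.inv_comp_eq, hθ]
  refine exists_right_adjoint J G (fun Y => eId V (G Y) ≫ (θ (G Y) Y).inv) θ ?_
  intro X Y
  obtain ⟨w, ⟨h⟩⟩ := cmp_limit adj1 adj2 hpre X Y
  apply Fork.IsLimit.hom_ext h
  change (θ X Y).inv ≫ cmp adj1 X Y = _ ≫ cmp adj1 X Y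
  rw [hθ', cmp, Category.assoc, map_post_psi]
  congr 1
  refine Eq.trans ?_ (vcomp_eq_pre _ _).symm
  rw [← eId_post (i Y), ← hθ', cmp, adj1.psi_hom]
  simp only [Category.assoc]

end Tri

end Helpers

end EnrichedAdjointTriangles
namespace EnrichedAdjointTriangles

/-- **Enriched Dubuc Theorem** (Corollary 1.2 of "On Biadjoint Triangles").

Let `(L ⊣ U, η, ε)` and `(E ⊣ R, ρ, μ)` (with `E = L ∘ J`) be `V`-adjunctions and assume
`L` is `V`-precomonadic.  Then `J` has a right `V`-adjoint iff for every `Y` the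
`V`-equalizer of `RL(U(μ_{LY})η_{JRLY})ρ_{RLY}, RL(η_Y) : RLY ⇉ RLULY` exists in `𝔄`;
in that case these `V`-equalizers give the values of the right `V`-adjoint. -/
theorem enriched_dubuc_theorem
    (V : Type u) [Category.{v} V] [MonoidalCategory V] [SymmetricCategory V]
    [MonoidalClosed V] [HasLimits V] [HasColimits V]
    {A : Type u₁} [EnrichedCategory V A] {B : Type u₂} [EnrichedCategory V B]
    {C : Type u₃} [EnrichedCategory V C]
    (J : EnrichedFunctor V A B) (L : EnrichedFunctor V B C) (R : EnrichedFunctor V C A)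
    (U : EnrichedFunctor V C B)
    (adj1 : VAdjunction V (EnrichedFunctor.comp V J L) R) (adj2 : VAdjunction V L U)
    (hpre : VPrecomonadic V L U adj2) :
    ((∃ G : EnrichedFunctor V B A, Nonempty (VAdjunction V J G)) ↔
      ∀ Y : B, HasVEqualizer V (rY V J L R U adj1 adj2 Y) (qY V L R U adj2 Y)) ∧
    (∀ (G : EnrichedFunctor V B A), VAdjunction V J G → ∀ Y : B,
      ∃ i, IsVEqualizer V (rY V J L R U adj1 adj2 Y) (qY V L R U adj2 Y) (G.obj Y) i) := by
  have hpre' : PPre adj2.toP := hpre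
  have h2 : ∀ (G : EnrichedFunctor V B A), VAdjunction V J G → ∀ Y : B,
      ∃ i, IsVEqualizer V (rY V J L R U adj1 adj2 Y) (qY V L R U adj2 Y) (G.obj Y) i :=
    fun G adj Y => part_two (adj1.toP.toC J L R) adj2.toP hpre' G adj.toP Y
  exact ⟨⟨fun ⟨G, ⟨adj⟩⟩ Y => ⟨G.obj Y, h2 G adj Y⟩,
    fun h => part_one (adj1.toP.toC J L R) adj2.toP hpre' h⟩, h2⟩

end EnrichedAdjointTriangles
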